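/- Let ρ > 0 and m ∈ (−√ρ, √ρ), fix a coordinate x, and let P_x(φ) := φ_x. Let f : ℝ → ℝ be Borel measurable with ∫_ℝ |f(t)| e^{−a t²} dt < ∞ for every a > 0. Then the single-coordinate expectations under the auxiliary microcanonical ensembles converge: lim_{N→∞} ∫ f(P_x(φ)) dμ_MC^{m,ρ;N}(φ) = (2π(ρ − m²))^{−1/2} ∫_ℝ f(t) e^{−(t−m)²/(2(ρ−m²))} dt. In particular, the sequence ∫ f∘P_x dμ_MC^{m,ρ;N} is bounded uniformly in N, i.e., it is O(1). -/

import Mathlib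

open MeasureTheory ProbabilityTheory Matrix

/-- The specific `p`-norm fluctuation distance `w_p(μ₁, μ₂; N)`:
the infimum over all couplings `γ` of `μ₁` and `μ₂` of
`∫ (1/N) ∑ᵢ |xᵢ - yᵢ|^p dγ`, raised to the power `1/p`. -/
noncomputable def fluctDist (p : ℝ) (N : ℕ) (μ₁ μ₂ : Measure (Fin N → ℝ)) : ℝ :=
  sInf {c : ℝ | ∃ γ : Measure ((Fin N → ℝ) × (Fin N → ℝ)), IsProbabilityMeasure γ ∧
      γ.map Prod.fst = μ₁ ∧ γ.map Prod.snd = μ₂ ∧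
      c = ∫ xy, (N : ℝ)⁻¹ * ∑ i, |xy.1 i - xy.2 i| ^ p ∂γ} ^ (1 / p)

/-- The standard Gaussian measure on `ℝ^N`. -/
noncomputable def stdGaussian (N : ℕ) : Measure (Fin N → ℝ) :=
  Measure.pi fun _ => gaussianReal 0 1

/-- `U` is an orthogonal matrix such that the first coordinate of `U x` is
`N^{-1/2} ∑ᵢ xᵢ`. -/
def GoodRotation {N : ℕ} (hN : 0 < N) (U : Matrix (Fin N) (Fin N) ℝ) : Prop :=
  Uᵀ * U = 1 ∧ ∀ x : Fin N → ℝ, U.mulVec x ⟨0, hN⟩ = (∑ i, x i) / Real.sqrt N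

/-- The auxiliary microcanonical ensemble `μ_MC^{m,ρ;N}` with magnetization density `m` and
particle density `ρ`: the pushforward under `U⁻¹` of the product of the Dirac mass at `m √N`
in the first coordinate with the uniform probability measure on the sphere of radius
`√(N(ρ − m²))` in the remaining `N − 1` coordinates.  The uniform sphere measure is realized
as the pushforward of the standard Gaussian on the remaining coordinates under radial
normalization. -/
noncomputable def mcSpherical {N : ℕ} (hN : 0 < N) (U : Matrix (Fin N) (Fin N) ℝ)
    (m ρ : ℝ) : Measure (Fin N → ℝ) :=
  (stdGaussian N).map fun x =>
    U⁻¹.mulVec fun i =>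
      if i = ⟨0, hN⟩ then m * Real.sqrt N
      else Real.sqrt (N * (ρ - m ^ 2)) * x i /
        Real.sqrt (∑ j ∈ Finset.univ.filter (fun j => j ≠ (⟨0, hN⟩ : Fin N)), x j ^ 2)


open scoped ENNReal NNReal

lemma aux_one (b : ℝ) (hb : 0 ≤ b) (G : ℝ → ℝ≥0∞) (hG : Measurable G) :
    ∫⁻ x, G x * ENNReal.ofReal (Real.exp (-(b * x ^ 2 / 2))) ∂(gaussianReal 0 1) =
      ENNReal.ofReal ((Real.sqrt (1 + b))⁻¹) *
        ∫⁻ x, G ((Real.sqrt (1 + b))⁻¹ * x) ∂(gaussianReal 0 1) := by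
  have h1 : (0 : ℝ) < 1 + b := by linarith
  have hs : 0 < Real.sqrt (1 + b) := Real.sqrt_pos.2 h1
  set r := (Real.sqrt (1 + b))⁻¹ with hr
  have hr0 : 0 < r := inv_pos.2 hs
  have hr2 : r ^ 2 = (1 + b)⁻¹ := by rw [hr, inv_pow, Real.sq_sqrt h1.le]
  have hm : Measurable (fun x : ℝ => r * x) := by fun_prop
  rw [← lintegral_map (f := G) hG hm, gaussianReal_map_const_mul]
  have hv : (NNReal.mk (r ^ 2) (sq_nonneg r) * 1) ≠ 0 := by
    rw [mul_one]
    intro h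
    have h2 : r ^ 2 = 0 := congrArg NNReal.toReal h
    exact (pow_pos hr0 2).ne' h2
  rw [gaussianReal_of_var_ne_zero _ hv, gaussianReal_of_var_ne_zero _ one_ne_zero,
    lintegral_withDensity_eq_lintegral_mul _ (measurable_gaussianPDF _ _) (by fun_prop),
    lintegral_withDensity_eq_lintegral_mul _ (measurable_gaussianPDF _ _) hG,
    ← lintegral_const_mul _ (by fun_prop)]
  refine lintegral_congr fun x => ?_
  simp only [Pi.mul_apply, gaussianPDF]
  rw [mul_comm (G x), ← mul_assoc, ← mul_assoc, ← ENNReal.ofReal_mul (gaussianPDFReal_nonneg _ _ _),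
    ← ENNReal.ofReal_mul hr0.le]
  congr 2
  simp only [gaussianPDFReal, NNReal.coe_mk, NNReal.coe_one, mul_one, mul_zero, sub_zero]
  rw [mul_assoc, ← Real.exp_add, Real.sqrt_mul (by positivity) (r ^ 2), Real.sqrt_sq hr0.le,
    mul_inv, mul_comm _ r⁻¹, ← mul_assoc, ← mul_assoc, mul_inv_cancel₀ hr0.ne', one_mul, hr2]
  congr 2
  field_simp
  ring

lemma lintegral_split (k : ℕ) (H : (Fin (k + 1) → ℝ) → ℝ≥0∞) (hH : Measurable H) :
    ∫⁻ y, H y ∂(stdGaussian (k + 1)) =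
      ∫⁻ y, ∫⁻ x, H (Fin.cons x y) ∂(gaussianReal 0 1) ∂(stdGaussian k) := by
  have mp := (measurePreserving_piFinSuccAbove
    (fun _ : Fin (k + 1) => gaussianReal 0 1) 0).symm
  unfold _root_.stdGaussian
  rw [← mp.lintegral_comp hH]
  refine (lintegral_prod_symm' (μ := gaussianReal 0 1)
    (ν := Measure.pi fun _ : Fin k => gaussianReal 0 1) _ (hH.comp mp.measurable)).trans ?_
  refine lintegral_congr fun y => lintegral_congr fun x => congrArg H ?_
  funext i
  refine Fin.cases ?_ (fun j => ?_) i
  · simp [MeasurableEquiv.piFinSuccAbove_symm_apply, Fin.insertNthEquiv]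
  · simp [MeasurableEquiv.piFinSuccAbove_symm_apply, Fin.insertNthEquiv]

lemma measurable_cons_aux (k : ℕ) :
    Measurable (fun p : (Fin k → ℝ) × ℝ => (Fin.cons p.2 p.1 : Fin (k + 1) → ℝ)) := by
  refine measurable_pi_lambda _ fun i => ?_
  refine Fin.cases ?_ (fun j => ?_) i
  · simp only [Fin.cons_zero]; fun_prop
  · simp only [Fin.cons_succ]; fun_prop

lemma aux_S (b : ℝ) (hb : 0 ≤ b) (k : ℕ) : ∀ (F : (Fin k → ℝ) → ℝ≥0∞) (_ : Measurable F),
    ∫⁻ y, F y * ENNReal.ofReal (Real.exp (-(b * (∑ i, y i ^ 2) / 2))) ∂(stdGaussian k) =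
      ENNReal.ofReal ((Real.sqrt (1 + b))⁻¹) ^ k *
        ∫⁻ y, F (fun i => (Real.sqrt (1 + b))⁻¹ * y i) ∂(stdGaussian k) := by
  induction k with
  | zero =>
    intro F hF
    simp only [Finset.univ_eq_empty, Finset.sum_empty, pow_zero, one_mul]
    refine lintegral_congr fun y => ?_
    have : y = (fun i => (Real.sqrt (1 + b))⁻¹ * y i) := Subsingleton.elim _ _
    rw [← this]; simp
  | succ k ih =>
    intro F hF
    have key := lintegral_split k
    have hcons := measurable_cons_aux k
    rw [key _ (by fun_prop), key _ (by fun_prop)]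
    have hinner : ∀ y : Fin k → ℝ,
        ∫⁻ x, F (Fin.cons x y) * ENNReal.ofReal (Real.exp
          (-(b * (∑ i, (Fin.cons x y : Fin (k + 1) → ℝ) i ^ 2) / 2))) ∂(gaussianReal 0 1) =
        (ENNReal.ofReal ((Real.sqrt (1 + b))⁻¹) *
          ∫⁻ x, F (Fin.cons ((Real.sqrt (1 + b))⁻¹ * x) y) ∂(gaussianReal 0 1)) *
          ENNReal.ofReal (Real.exp (-(b * (∑ i, y i ^ 2) / 2))) := by
      intro y
      have hFy : Measurable (fun x : ℝ => F (Fin.cons x y)) :=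
        hF.comp (hcons.comp (by fun_prop : Measurable (fun x : ℝ => (y, x))))
      rw [← aux_one b hb (fun x => F (Fin.cons x y)) hFy, ← lintegral_mul_const _ (by fun_prop)]
      refine lintegral_congr fun x => ?_
      rw [mul_assoc, ← ENNReal.ofReal_mul (Real.exp_pos _).le, ← Real.exp_add]
      congr 3
      rw [Fin.sum_univ_succ]
      simp only [Fin.cons_zero, Fin.cons_succ]
      ring
    simp_rw [hinner]
    have hm2 : Measurable (fun y : Fin k → ℝ =>
        ∫⁻ x, F (Fin.cons ((Real.sqrt (1 + b))⁻¹ * x) y) ∂(gaussianReal 0 1)) := by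
      refine Measurable.lintegral_prod_right'
        (f := fun p : (Fin k → ℝ) × ℝ => F (Fin.cons ((Real.sqrt (1 + b))⁻¹ * p.2) p.1)) ?_
      exact hF.comp (hcons.comp
        (by fun_prop : Measurable (fun p : (Fin k → ℝ) × ℝ => (p.1, (Real.sqrt (1 + b))⁻¹ * p.2))))
    have hm3 : Measurable (fun y : Fin k → ℝ =>
        ∫⁻ x, F (Fin.cons ((Real.sqrt (1 + b))⁻¹ * x) (fun i => (Real.sqrt (1 + b))⁻¹ * y i))
          ∂(gaussianReal 0 1)) := hm2.comp
      (by fun_prop : Measurable (fun y : Fin k → ℝ => fun i => (Real.sqrt (1 + b))⁻¹ * y i))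
    rw [ih _ (hm2.const_mul _), lintegral_const_mul _ hm3, ← mul_assoc, pow_succ]
    congr 1
    refine lintegral_congr fun y => lintegral_congr fun x => ?_
    congr 1
    funext i
    refine Fin.cases ?_ (fun j => ?_) i <;> simp

lemma chg (n q : ℝ) (hn : 0 < n) (hq : 0 < q) (h : ℝ → ℝ≥0∞) (hh : Measurable h) :
    ∫⁻ x, h (Real.sqrt n * x / Real.sqrt (x ^ 2 + q ^ 2)) ∂(gaussianReal 0 1) =
    ∫⁻ t in Set.Ioo (-Real.sqrt n) (Real.sqrt n),
      (h t * ENNReal.ofReal (n / ((n - t ^ 2) * Real.sqrt (n - t ^ 2)) *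
        (Real.sqrt (2 * Real.pi))⁻¹)) * (ENNReal.ofReal q *
        ENNReal.ofReal (Real.exp (-(t ^ 2 / (n - t ^ 2) * q ^ 2 / 2)))) := by
  rw [gaussianReal_of_var_ne_zero _ one_ne_zero,
    lintegral_withDensity_eq_lintegral_mul _ (measurable_gaussianPDF _ _) (by fun_prop)]
  have hpos : ∀ t ∈ Set.Ioo (-Real.sqrt n) (Real.sqrt n), 0 < n - t ^ 2 := by
    intro t ht
    have := Real.sq_lt.2 ⟨ht.1, ht.2⟩
    linarith
  have hback : ∀ t ∈ Set.Ioo (-Real.sqrt n) (Real.sqrt n),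
      Real.sqrt n * (q * t / Real.sqrt (n - t ^ 2)) /
        Real.sqrt ((q * t / Real.sqrt (n - t ^ 2)) ^ 2 + q ^ 2) = t := by
    intro t ht
    have h0 := hpos t ht
    have h1 : (q * t / Real.sqrt (n - t ^ 2)) ^ 2 + q ^ 2 = q ^ 2 * n / (n - t ^ 2) := by
      rw [div_pow, Real.sq_sqrt h0.le]; field_simp; ring
    rw [h1, Real.sqrt_div (by positivity), Real.sqrt_mul (by positivity), Real.sqrt_sq hq.le]
    have := Real.sqrt_pos.2 h0
    have := Real.sqrt_pos.2 hn
    field_simp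
  have himg : (fun t => q * t / Real.sqrt (n - t ^ 2)) '' Set.Ioo (-Real.sqrt n) (Real.sqrt n)
      = Set.univ := by
    refine Set.eq_univ_of_forall fun x => ?_
    have hx : 0 < x ^ 2 + q ^ 2 := by positivity
    have hsx := Real.sqrt_pos.2 hx
    have hsn := Real.sqrt_pos.2 hn
    have hsq : (Real.sqrt n * x / Real.sqrt (x ^ 2 + q ^ 2)) ^ 2 = n * x ^ 2 / (x ^ 2 + q ^ 2) := by
      rw [div_pow, mul_pow, Real.sq_sqrt hx.le, Real.sq_sqrt hn.le]
    refine ⟨Real.sqrt n * x / Real.sqrt (x ^ 2 + q ^ 2), ?_, ?_⟩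
    · have : (Real.sqrt n * x / Real.sqrt (x ^ 2 + q ^ 2)) ^ 2 < n := by
        rw [hsq, div_lt_iff₀ hx]
        have : 0 < n * q ^ 2 := by positivity
        nlinarith
      exact Real.sq_lt.1 this
    · have : n - (Real.sqrt n * x / Real.sqrt (x ^ 2 + q ^ 2)) ^ 2 =
          n * q ^ 2 / (x ^ 2 + q ^ 2) := by
        rw [hsq]; field_simp; ring
      simp only [this]
      rw [Real.sqrt_div (by positivity), Real.sqrt_mul hn.le, Real.sqrt_sq hq.le]
      field_simp
  have hder : ∀ t ∈ Set.Ioo (-Real.sqrt n) (Real.sqrt n),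
      HasDerivWithinAt (fun t => q * t / Real.sqrt (n - t ^ 2))
        (q * (n / ((n - t ^ 2) * Real.sqrt (n - t ^ 2)))) (Set.Ioo (-Real.sqrt n) (Real.sqrt n)) t := by
    intro t ht
    have h0 := hpos t ht
    have hs := Real.sqrt_pos.2 h0
    have h2 := Real.sq_sqrt h0.le
    have d1 : HasDerivAt (fun t : ℝ => n - t ^ 2) (-(2 * t)) t := by
      simpa using ((hasDerivAt_pow 2 t).const_sub n)
    have d2 := d1.sqrt h0.ne'
    have d3 := (((hasDerivAt_id t).const_mul q).div d2 hs.ne').hasDerivWithinAt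
      (s := Set.Ioo (-Real.sqrt n) (Real.sqrt n))
    refine d3.congr_deriv ?_
    simp only [id, mul_one]
    set s := Real.sqrt (n - t ^ 2)
    rw [← h2]
    field_simp
    linear_combination h2
  have hinj : Set.InjOn (fun t => q * t / Real.sqrt (n - t ^ 2))
      (Set.Ioo (-Real.sqrt n) (Real.sqrt n)) := by
    refine Set.LeftInvOn.injOn (f₁' := fun x => Real.sqrt n * x / Real.sqrt (x ^ 2 + q ^ 2)) ?_
    intro t ht
    exact hback t ht
  rw [← setLIntegral_univ, ← himg,
    lintegral_image_eq_lintegral_abs_deriv_mul measurableSet_Ioo hder hinj]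
  refine setLIntegral_congr_fun measurableSet_Ioo fun t ht => ?_
  have h0 := hpos t ht
  have hs := Real.sqrt_pos.2 h0
  simp only [Pi.mul_apply]
  rw [hback t ht, gaussianPDF, abs_of_pos (by positivity), ← mul_assoc, ← ENNReal.ofReal_mul (by positivity),
    ← ENNReal.ofReal_mul hq.le, mul_assoc (h t), ← ENNReal.ofReal_mul (by positivity), mul_comm (h t)]
  congr 2
  simp only [gaussianPDFReal, NNReal.coe_one, mul_one, sub_zero]
  have : -(q * t / Real.sqrt (n - t ^ 2)) ^ 2 / 2 = -(t ^ 2 / (n - t ^ 2) * q ^ 2 / 2) := by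
    rw [div_pow, Real.sq_sqrt h0.le]; ring
  rw [this]
  ring

lemma core (k : ℕ) (hk : 0 < k) : ∃ C : ℝ≥0∞, ∀ h : ℝ → ℝ≥0∞, Measurable h →
    ∫⁻ y, h (Real.sqrt (k + 1) * y 0 / Real.sqrt (∑ i, y i ^ 2)) ∂(stdGaussian (k + 1)) =
    C * ∫⁻ t in Set.Ioo (-Real.sqrt ((k : ℝ) + 1)) (Real.sqrt (k + 1)),
      h t * ENNReal.ofReal ((1 - t ^ 2 / (k + 1)) ^ (((k : ℝ) + 1 - 3) / 2)) := by
  set n : ℝ := (k : ℝ) + 1 with hn'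
  have hn : 0 < n := by positivity
  refine ⟨ENNReal.ofReal ((Real.sqrt n * Real.sqrt (2 * Real.pi))⁻¹) *
    ∫⁻ y, ENNReal.ofReal (Real.sqrt (∑ i, y i ^ 2)) ∂(stdGaussian k), fun h hh => ?_⟩
  have : SFinite (_root_.stdGaussian k) := by unfold _root_.stdGaussian; infer_instance
  rw [lintegral_split k _ (by fun_prop)]
  have hae : ∀ᵐ y ∂(stdGaussian k), 0 < Real.sqrt (∑ i, y i ^ 2) := by
    have h0 : ∀ᵐ y ∂(stdGaussian k), y ⟨0, hk⟩ ≠ 0 := by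
      have hz : ∀ᵐ x ∂(gaussianReal 0 1), x ≠ (0 : ℝ) := by
        have := nullSingletonClass_gaussianReal (μ := 0) (v := 1) one_ne_zero
        simp [ae_iff]
      exact (measurePreserving_eval (fun _ : Fin k => gaussianReal 0 1) ⟨0, hk⟩).quasiMeasurePreserving.ae hz
    filter_upwards [h0] with y hy
    refine Real.sqrt_pos.2 (lt_of_lt_of_le (by positivity : 0 < y ⟨0, hk⟩ ^ 2) ?_)
    exact Finset.single_le_sum (f := fun i => y i ^ 2) (fun i _ => sq_nonneg _) (Finset.mem_univ _)
  have step : ∫⁻ y, ∫⁻ x, h (Real.sqrt n * (Fin.cons x y : Fin (k + 1) → ℝ) 0 /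
        Real.sqrt (∑ i, (Fin.cons x y : Fin (k + 1) → ℝ) i ^ 2)) ∂(gaussianReal 0 1) ∂(stdGaussian k) =
      ∫⁻ y, (∫⁻ t in Set.Ioo (-Real.sqrt n) (Real.sqrt n),
      (h t * ENNReal.ofReal (n / ((n - t ^ 2) * Real.sqrt (n - t ^ 2)) *
        (Real.sqrt (2 * Real.pi))⁻¹)) * (ENNReal.ofReal (Real.sqrt (∑ i, y i ^ 2)) *
        ENNReal.ofReal (Real.exp (-(t ^ 2 / (n - t ^ 2) * (∑ i, y i ^ 2) / 2))))) ∂(stdGaussian k) := by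
    refine lintegral_congr_ae ?_
    filter_upwards [hae] with y hy
    have := chg n _ hn hy h hh
    rw [Real.sq_sqrt (Finset.sum_nonneg fun i _ => sq_nonneg _)] at this
    rw [← this]
    refine lintegral_congr fun x => ?_
    rw [Fin.sum_univ_succ]
    simp
  rw [step, lintegral_lintegral_swap (by fun_prop),
    ← lintegral_const_mul _ (by fun_prop)]
  refine setLIntegral_congr_fun measurableSet_Ioo fun t ht => ?_
  have h0 : 0 < n - t ^ 2 := by
    have := Real.sq_lt.2 ⟨ht.1, ht.2⟩
    linarith
  rw [lintegral_const_mul _ (by fun_prop), aux_S _ (by positivity) k _ (by fun_prop)]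
  set w := 1 - t ^ 2 / n with hw
  have hw0 : 0 < w := by
    have : w = (n - t ^ 2) / n := by rw [hw]; field_simp
    rw [this]; positivity
  have hnw : n - t ^ 2 = n * w := by rw [hw]; field_simp
  have hr : (Real.sqrt (1 + t ^ 2 / (n - t ^ 2)))⁻¹ = Real.sqrt w := by
    rw [← Real.sqrt_inv]
    congr 1
    have : t ^ 2 = n - n * w := by linarith
    rw [hnw, this]; field_simp; ring
  rw [hr]
  have hsc : ∀ y : Fin k → ℝ, ENNReal.ofReal (Real.sqrt (∑ i, (Real.sqrt w * y i) ^ 2)) =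
      ENNReal.ofReal (Real.sqrt w) * ENNReal.ofReal (Real.sqrt (∑ i, y i ^ 2)) := by
    intro y
    rw [← ENNReal.ofReal_mul (Real.sqrt_nonneg _), ← Real.sqrt_mul hw0.le, Finset.mul_sum]
    simp_rw [mul_pow, Real.sq_sqrt hw0.le]
  simp_rw [hsc]
  rw [lintegral_const_mul _ (by fun_prop)]
  set K := ∫⁻ y, ENNReal.ofReal (Real.sqrt (∑ i, y i ^ 2)) ∂(stdGaussian k)
  have hfin : n / ((n - t ^ 2) * Real.sqrt (n - t ^ 2)) * (Real.sqrt (2 * Real.pi))⁻¹ *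
      (Real.sqrt w ^ (k + 1)) = (Real.sqrt n * Real.sqrt (2 * Real.pi))⁻¹ * w ^ ((n - 3) / 2) := by
    have e1 : w ^ ((n - 3) / 2) = Real.sqrt w ^ (k + 1) / (w * Real.sqrt w) := by
      have : (n - 3) / 2 = (1 / 2) * ((k + 1 : ℕ) : ℝ) - (1 + 1 / 2) := by
        rw [hn']; push_cast; ring
      rw [this, Real.rpow_sub hw0, Real.rpow_add hw0, Real.rpow_mul hw0.le, Real.rpow_natCast,
        Real.rpow_one, ← Real.sqrt_eq_rpow]
    rw [e1, hnw, Real.sqrt_mul hn.le]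
    have := Real.sqrt_pos.2 hw0
    have := Real.sqrt_pos.2 hn
    have : 0 < Real.sqrt (2 * Real.pi) := Real.sqrt_pos.2 (by positivity)
    field_simp
  have hA : 0 ≤ n / ((n - t ^ 2) * Real.sqrt (n - t ^ 2)) * (Real.sqrt (2 * Real.pi))⁻¹ := by
    positivity
  have hfin2 := congrArg ENNReal.ofReal hfin
  rw [ENNReal.ofReal_mul hA, ENNReal.ofReal_mul (p := (Real.sqrt n * Real.sqrt (2 * Real.pi))⁻¹)
    (by positivity), ENNReal.ofReal_pow (by positivity)] at hfin2
  calc _ = (ENNReal.ofReal (n / ((n - t ^ 2) * Real.sqrt (n - t ^ 2)) * (Real.sqrt (2 * Real.pi))⁻¹) *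
      ENNReal.ofReal (Real.sqrt w) ^ (k + 1)) * (h t * K) := by ring
    _ = _ := by rw [hfin2]; ring

lemma rot (k : ℕ) (u : Fin (k + 2) → ℝ) (hu0 : u 0 = 0) (hu1 : ∑ i, u i ^ 2 = 1)
    (H : ℝ → ℝ → ℝ≥0∞) (hH : Measurable (fun p : ℝ × ℝ => H p.1 p.2)) :
    ∫⁻ x, H (∑ i, u i * x i) (∑ j ∈ Finset.univ.filter (fun j => j ≠ (0 : Fin (k + 2))), x j ^ 2)
      ∂(stdGaussian (k + 2)) =
    ∫⁻ y, H (y 0) (∑ j, y j ^ 2) ∂(stdGaussian (k + 1)) := by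
  let v : Fin (k + 2) → EuclideanSpace ℝ (Fin (k + 2)) := fun i => if i = 0 then EuclideanSpace.single 0 1 else WithLp.toLp 2 u
  have hort : Orthonormal ℝ (Set.domRestrict ({0, 1} : Set (Fin (k + 2))) v) := by
    have e00 : ‖v 0‖ = 1 := by simp [v]
    have e11 : ‖v 1‖ = 1 := by
      simp [v, EuclideanSpace.norm_eq, hu1]
    have e01 : inner ℝ (v 0) (v 1) = 0 := by simp [v, hu0, EuclideanSpace.inner_single_left]
    constructor
    · rintro ⟨i, hi⟩
      rcases hi with rfl | rfl
      · exact e00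
      · exact e11
    · rintro ⟨i, hi⟩ ⟨j, hj⟩ hij
      have hij' : i ≠ j := fun h => hij (Subtype.ext h)
      rcases hi with rfl | rfl <;> rcases hj with rfl | rfl
      · exact absurd rfl hij'
      · exact e01
      · change inner ℝ (v 1) (v 0) = 0
        rw [real_inner_comm]; exact e01
      · exact absurd rfl hij'
  obtain ⟨b, hb⟩ := hort.exists_orthonormalBasis_extension_of_card_eq (by simp)
  have hb0 : b 0 = EuclideanSpace.single 0 1 := by rw [hb 0 (by simp)]; simp [v]
  have hb1 : b 1 = WithLp.toLp 2 u := by rw [hb 1 (by simp)]; simp [v]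
  let G : EuclideanSpace ℝ (Fin (k + 2)) → ℝ≥0∞ := fun z => H (inner ℝ (b 1) z) (‖z‖ ^ 2 - (inner ℝ (b 0) z) ^ 2)
  have hG : Measurable G := by
    have : Measurable (fun z : EuclideanSpace ℝ (Fin (k + 2)) => ((inner ℝ (b 1) z : ℝ), (‖z‖ ^ 2 - (inner ℝ (b 0) z) ^ 2 : ℝ))) := by
      fun_prop
    exact hH.comp this
  have h1 : ∫⁻ x, H (∑ i, u i * x i)
      (∑ j ∈ Finset.univ.filter (fun j => j ≠ (0 : Fin (k + 2))), x j ^ 2) ∂(stdGaussian (k + 2)) =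
      ∫⁻ z, G z ∂(ProbabilityTheory.stdGaussian (EuclideanSpace ℝ (Fin (k + 2)))) := by
    rw [← map_pi_eq_stdGaussian, lintegral_map hG (by fun_prop)]
    refine lintegral_congr fun x => ?_
    simp only [G, hb0, hb1]
    congr 1
    · simp [PiLp.inner_apply, mul_comm]
    · rw [EuclideanSpace.real_norm_sq_eq, Finset.filter_ne' Finset.univ (0 : Fin (k + 2)),
        ← Finset.add_sum_erase _ _ (Finset.mem_univ (0 : Fin (k + 2)))]
      simp [EuclideanSpace.inner_single_left]
  rw [h1, stdGaussian_eq_map_pi_orthonormalBasis b, lintegral_map hG (by fun_prop)]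
  have h2 : ∀ y : Fin (k + 2) → ℝ, G (∑ i, y i • b i) =
      H (y 1) (∑ j : Fin (k + 1), y j.succ ^ 2) := by
    intro y
    have hi : ∀ j, inner ℝ (b j) (∑ i, y i • b i) = y j := by
      intro j
      exact b.orthonormal.inner_right_fintype y j
    have hnorm : ‖∑ i, y i • b i‖ ^ 2 = ∑ i, y i ^ 2 := by
      rw [← b.sum_sq_inner_right]
      simp_rw [hi]
    simp only [G, hi, hnorm]
    rw [Fin.sum_univ_succ]
    congr 1
    ring
  simp_rw [h2]
  have := lintegral_split (k + 1) (fun y => H (y 1) (∑ j : Fin (k + 1), y j.succ ^ 2)) (by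
    have : Measurable (fun y : Fin (k + 2) → ℝ => (y 1, ∑ j : Fin (k + 1), y j.succ ^ 2)) := by
      fun_prop
    exact hH.comp this)
  refine this.trans ?_
  refine lintegral_congr fun y => ?_
  have h3 : ∀ x : ℝ, (Fin.cons x y : Fin (k + 2) → ℝ) 1 = y 0 := fun x => rfl
  simp [h3]

lemma law (ρ m : ℝ) (hs : 0 < ρ - m ^ 2) (k : ℕ) (hk : 0 < k) (hN : 0 < k + 2)
    (U : Matrix (Fin (k + 2)) (Fin (k + 2)) ℝ) (hU : GoodRotation hN U) (i0 : Fin (k + 2)) :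
    ∃ C : ℝ≥0∞, ∀ h : ℝ → ℝ≥0∞, Measurable h →
      ∫⁻ φ, h (φ i0) ∂(mcSpherical hN U m ρ) =
      C * ∫⁻ t in Set.Ioo (-Real.sqrt ((k : ℝ) + 1)) (Real.sqrt (k + 1)),
      h (m + Real.sqrt (ρ - m ^ 2) * t) *
        ENNReal.ofReal ((1 - t ^ 2 / (k + 1)) ^ (((k : ℝ) + 1 - 3) / 2)) := by
  obtain ⟨C, hC⟩ := core k hk
  refine ⟨C, fun h hh => ?_⟩
  rw [← hC (fun t => h (m + Real.sqrt (ρ - m ^ 2) * t)) (by fun_prop)]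
  have hinv : U⁻¹ = Uᵀ := Matrix.inv_eq_left_inv hU.1
  set M : ℝ := (k : ℝ) + 2 with hM
  have hMc : ((k + 2 : ℕ) : ℝ) = M := by push_cast; rfl
  have hM0 : 0 < M := by positivity
  have hn0 : (0 : ℝ) < (k : ℝ) + 1 := by positivity
  have hz : (⟨0, hN⟩ : Fin (k + 2)) = 0 := rfl
  have hU0 : U 0 i0 = (Real.sqrt M)⁻¹ := by
    have := hU.2 (Pi.single i0 1)
    rw [hMc, hz] at this
    simpa using this
  have hcol : ∑ i, U i i0 ^ 2 = 1 := by
    have := congrFun (congrFun hU.1 i0) i0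
    simp only [Matrix.mul_apply, Matrix.transpose_apply, Matrix.one_apply_eq] at this
    rw [← this]
    exact Finset.sum_congr rfl fun i _ => sq _
  let u : Fin (k + 2) → ℝ := fun i => if i = 0 then 0 else
    U i i0 * (Real.sqrt M / Real.sqrt (k + 1))
  have hu0 : u 0 = 0 := by simp [u]
  have hus : ∀ j : Fin (k + 1), u j.succ = U j.succ i0 * (Real.sqrt M / Real.sqrt (k + 1)) := by
    intro j; simp [u]
  have hu1 : ∑ i, u i ^ 2 = 1 := by
    rw [Fin.sum_univ_succ] at hcol ⊢
    rw [hu0]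
    simp_rw [hus, mul_pow]
    rw [← Finset.sum_mul, div_pow, Real.sq_sqrt hM0.le, Real.sq_sqrt hn0.le]
    have : ∑ i : Fin (k + 1), U i.succ i0 ^ 2 = 1 - M⁻¹ := by
      rw [← hcol, hU0, inv_pow, Real.sq_sqrt hM0.le]; ring
    rw [this, hM]; field_simp; ring
  have hr := rot k u hu0 hu1
    (fun a q => h (m + Real.sqrt (ρ - m ^ 2) * (Real.sqrt (k + 1) * a / Real.sqrt q))) (by fun_prop)
  rw [← hr]
  unfold mcSpherical
  rw [lintegral_map (by fun_prop) (by
    refine measurable_pi_lambda _ fun i => ?_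
    simp only [Matrix.mulVec, dotProduct]
    refine Finset.measurable_sum _ fun j _ => ?_
    refine Measurable.const_mul ?_ _
    split_ifs <;> fun_prop)]
  refine lintegral_congr fun x => ?_
  congr 1
  rw [hinv, hMc]
  simp only [hz]
  set Q := Real.sqrt (∑ j ∈ Finset.univ.filter (fun j => j ≠ (0 : Fin (k + 2))), x j ^ 2)
  simp only [Matrix.mulVec, dotProduct, Matrix.transpose_apply]
  rw [Fin.sum_univ_succ, Fin.sum_univ_succ (f := fun i => u i * x i), hu0, hU0, Real.sqrt_mul hM0.le]
  have hsM := Real.sqrt_pos.2 hM0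
  have hsn := Real.sqrt_pos.2 hn0
  simp only [if_true, Fin.succ_ne_zero, if_false, hus]
  congr 1
  · field_simp
  · rw [zero_mul, zero_add, Finset.mul_sum, Finset.sum_div, Finset.mul_sum]
    refine Finset.sum_congr rfl fun j _ => ?_
    field_simp

/-- The unnormalized limiting density. -/
noncomputable def kap (k : ℕ) (t : ℝ) : ℝ :=
  (Set.Ioo (-Real.sqrt ((k : ℝ) + 1)) (Real.sqrt (k + 1))).indicator
    (fun t => (1 - t ^ 2 / (k + 1)) ^ (((k : ℝ) + 1 - 3) / 2)) t

lemma kap_w_pos (k : ℕ) (t : ℝ) (ht : t ∈ Set.Ioo (-Real.sqrt ((k : ℝ) + 1)) (Real.sqrt (k + 1))) :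
    0 < 1 - t ^ 2 / ((k : ℝ) + 1) := by
  have := Real.sq_lt.2 ⟨ht.1, ht.2⟩
  have h2 : t ^ 2 / ((k : ℝ) + 1) < 1 := by rw [div_lt_one (by positivity)]; exact this
  linarith

lemma kap_nonneg (k : ℕ) (t : ℝ) : 0 ≤ kap k t := by
  refine Set.indicator_nonneg (fun t ht => ?_) t
  exact Real.rpow_nonneg (kap_w_pos k t ht).le _

lemma kap_meas (k : ℕ) : Measurable (kap k) := by
  unfold kap
  exact Measurable.indicator (by fun_prop) measurableSet_Ioo

lemma kap_le (k : ℕ) (hk : 3 ≤ k) (t : ℝ) : kap k t ≤ Real.exp (-(1 / 8) * t ^ 2) := by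
  unfold kap
  refine Set.indicator_apply_le' (fun ht => ?_) (fun _ => (Real.exp_pos _).le)
  have hw := kap_w_pos k t ht
  have hk' : (3 : ℝ) ≤ k := by exact_mod_cast hk
  have h1 : 1 - t ^ 2 / ((k : ℝ) + 1) ≤ Real.exp (-(t ^ 2 / ((k : ℝ) + 1))) := by
    have := Real.add_one_le_exp (-(t ^ 2 / ((k : ℝ) + 1)))
    linarith
  refine (Real.rpow_le_rpow hw.le h1 (by linarith)).trans ?_
  rw [← Real.exp_mul]
  refine Real.exp_le_exp.2 ?_
  have h3 : 1 / 8 ≤ ((k : ℝ) + 1 - 3) / 2 / (k + 1) := by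
    rw [le_div_iff₀ (by positivity)]; linarith
  have h4 := mul_le_mul_of_nonneg_right h3 (sq_nonneg t)
  have h5 : -(t ^ 2 / ((k : ℝ) + 1)) * (((k : ℝ) + 1 - 3) / 2) =
    -(((k : ℝ) + 1 - 3) / 2 / (k + 1) * t ^ 2) := by ring
  rw [h5]; linarith

lemma kap_tendsto (t : ℝ) :
    Filter.Tendsto (fun k : ℕ => kap k t) Filter.atTop (nhds (Real.exp (-(1 / 2) * t ^ 2))) := by
  have hcast : Filter.Tendsto (fun k : ℕ => (k : ℝ) + 1) Filter.atTop Filter.atTop :=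
    Filter.tendsto_atTop_add_const_right _ _ tendsto_natCast_atTop_atTop
  have h1 : Filter.Tendsto (fun k : ℕ => (1 + (-t ^ 2) / ((k : ℝ) + 1)) ^ ((k : ℝ) + 1))
      Filter.atTop (nhds (Real.exp (-t ^ 2))) :=
    (Real.tendsto_one_add_div_rpow_exp (-t ^ 2)).comp hcast
  have h2 : Filter.Tendsto (fun k : ℕ => 1 + (-t ^ 2) / ((k : ℝ) + 1)) Filter.atTop (nhds 1) := by
    have := (Filter.Tendsto.const_div_atTop hcast (-t ^ 2)).const_add 1
    simpa using this
  have h3 := (h1.rpow_const (p := 1 / 2) (Or.inl (Real.exp_pos _).ne')).mul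
    (h2.rpow_const (p := -(3 / 2)) (Or.inl one_ne_zero))
  rw [Real.one_rpow, mul_one, ← Real.exp_mul] at h3
  have e : -t ^ 2 * (1 / 2) = -(1 / 2) * t ^ 2 := by ring
  rw [e] at h3
  refine h3.congr' ?_
  filter_upwards [hcast.eventually (Filter.eventually_gt_atTop (t ^ 2))] with k hk
  have hmem : t ∈ Set.Ioo (-Real.sqrt ((k : ℝ) + 1)) (Real.sqrt (k + 1)) := Real.sq_lt.1 hk
  have hw := kap_w_pos k t hmem
  unfold kap
  rw [Set.indicator_of_mem hmem]
  have e2 : 1 + (-t ^ 2) / ((k : ℝ) + 1) = 1 - t ^ 2 / ((k : ℝ) + 1) := by ring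
  rw [e2, ← Real.rpow_mul hw.le, ← Real.rpow_add hw]
  congr 1
  ring

lemma law2 (ρ m : ℝ) (hs : 0 < ρ - m ^ 2) (k : ℕ) (hk : 0 < k) (hN : 0 < k + 2)
    (U : Matrix (Fin (k + 2)) (Fin (k + 2)) ℝ) (hU : GoodRotation hN U) (i0 : Fin (k + 2)) :
    ∃ c : ℝ, (∀ f : ℝ → ℝ, Measurable f →
      ∫ φ, f (φ i0) ∂(mcSpherical hN U m ρ) =
      c * ∫ t, f (m + Real.sqrt (ρ - m ^ 2) * t) * kap k t) ∧ c * ∫ t, kap k t = 1 := by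
  obtain ⟨C, hC⟩ := law ρ m hs k hk hN U hU i0
  set s := Real.sqrt (ρ - m ^ 2)
  have hprob : IsProbabilityMeasure (mcSpherical hN U m ρ) := by
    unfold mcSpherical
    have : IsProbabilityMeasure (_root_.stdGaussian (k + 2)) := by
      unfold _root_.stdGaussian; infer_instance
    refine Measure.isProbabilityMeasure_map (Measurable.aemeasurable ?_)
    refine measurable_pi_lambda _ fun i => ?_
    simp only [Matrix.mulVec, dotProduct]
    refine Finset.measurable_sum _ fun j _ => ?_
    refine Measurable.const_mul ?_ _
    split_ifs <;> fun_prop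
  have hkm := kap_meas k
  have hC2 : ∀ h : ℝ → ℝ≥0∞, Measurable h →
      ∫⁻ φ, h (φ i0) ∂(mcSpherical hN U m ρ) =
      C * ∫⁻ t, h (m + s * t) * ENNReal.ofReal (kap k t) := by
    intro h hh
    rw [hC h hh, ← lintegral_indicator measurableSet_Ioo]
    congr 1
    refine lintegral_congr fun t => ?_
    by_cases ht : t ∈ Set.Ioo (-Real.sqrt ((k : ℝ) + 1)) (Real.sqrt (k + 1))
    · simp [kap, Set.indicator_of_mem ht]
    · simp [kap, Set.indicator_of_notMem ht]
  have hone := hC2 (fun _ => 1) measurable_const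
  simp only [lintegral_const, measure_univ, one_mul] at hone
  have hCtop : C ≠ ⊤ := by
    rintro rfl
    by_cases h0 : ∫⁻ t, ENNReal.ofReal (kap k t) = 0
    · rw [h0] at hone; simp at hone
    · rw [ENNReal.top_mul h0] at hone; simp at hone
  have hmeas : Measurable (fun t : ℝ => C * ENNReal.ofReal (kap k t)) := by fun_prop
  have hmap : (mcSpherical hN U m ρ).map (fun φ => φ i0) =
      (volume.withDensity (fun t => C * ENNReal.ofReal (kap k t))).map (fun t => m + s * t) := by
    refine Measure.ext_of_lintegral _ fun h hh => ?_
    rw [lintegral_map hh (by fun_prop), lintegral_map hh (by fun_prop), hC2 h hh,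
      lintegral_withDensity_eq_lintegral_mul _ hmeas (by fun_prop),
      ← lintegral_const_mul _ (by fun_prop)]
    refine lintegral_congr fun t => ?_
    simp only [Pi.mul_apply]
    ring
  have hmain : ∀ f : ℝ → ℝ, Measurable f →
      ∫ φ, f (φ i0) ∂(mcSpherical hN U m ρ) =
      C.toReal * ∫ t, f (m + s * t) * kap k t := by
    intro f hf
    rw [← integral_map (φ := fun φ : Fin (k + 2) → ℝ => φ i0)
      (measurable_pi_apply i0).aemeasurable
      hf.aestronglyMeasurable, hmap, integral_map (by fun_prop) hf.aestronglyMeasurable,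
      integral_withDensity_eq_integral_toReal_smul hmeas
        (Filter.Eventually.of_forall fun t => ENNReal.mul_lt_top hCtop.lt_top ENNReal.ofReal_lt_top),
      ← integral_const_mul]
    refine integral_congr_ae (Filter.Eventually.of_forall fun t => ?_)
    simp only [ENNReal.toReal_mul, ENNReal.toReal_ofReal (kap_nonneg k t), smul_eq_mul]
    ring
  refine ⟨C.toReal, hmain, ?_⟩
  have := hmain (fun _ => 1) measurable_const
  simpa using this.symm

lemma dct (g : ℝ → ℝ) (hg : Measurable g)
    (h_integrable : Integrable (fun t => |g t| * Real.exp (-(1 / 8) * t ^ 2))) :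
    Filter.Tendsto (fun k : ℕ => ∫ t, g t * kap k t) Filter.atTop
      (nhds (∫ t, g t * Real.exp (-(1 / 2) * t ^ 2))) := by
  refine tendsto_integral_filter_of_dominated_convergence _ ?_ ?_ h_integrable ?_
  · exact Filter.Eventually.of_forall fun k => (hg.mul (kap_meas k)).aestronglyMeasurable
  · filter_upwards [Filter.eventually_ge_atTop 3] with k hk
    refine Filter.Eventually.of_forall fun t => ?_
    rw [norm_mul, Real.norm_eq_abs, Real.norm_eq_abs, abs_of_nonneg (kap_nonneg k t)]
    exact mul_le_mul_of_nonneg_left (kap_le k hk t) (abs_nonneg _)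
  · exact Filter.Eventually.of_forall fun t => (kap_tendsto t).const_mul _

lemma int_shift (f : ℝ → ℝ) (hf : Measurable f) (m s : ℝ) (hs : 0 < s)
    (hfint : ∀ a : ℝ, 0 < a → Integrable (fun t : ℝ => |f t| * Real.exp (-a * t ^ 2))) :
    Integrable (fun t => |f (m + s * t)| * Real.exp (-(1 / 8) * t ^ 2)) := by
  have h1 : Integrable (fun t => |f t| * Real.exp (-(1 / 8) * ((t - m) / s) ^ 2)) := by
    refine ((hfint (1 / (16 * s ^ 2)) (by positivity)).const_mul
      (Real.exp (m ^ 2 / (8 * s ^ 2)))).mono' (by fun_prop) ?_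
    refine Filter.Eventually.of_forall fun t => ?_
    rw [Real.norm_of_nonneg (by positivity), ← mul_assoc, mul_comm (Real.exp _) |f t|, mul_assoc,
      ← Real.exp_add]
    refine mul_le_mul_of_nonneg_left (Real.exp_le_exp.2 ?_) (abs_nonneg _)
    have : m ^ 2 / (8 * s ^ 2) + -(1 / (16 * s ^ 2)) * t ^ 2 - (-(1 / 8) * ((t - m) / s) ^ 2) =
      (t - 2 * m) ^ 2 / (16 * s ^ 2) := by field_simp; ring
    have h2 : 0 ≤ (t - 2 * m) ^ 2 / (16 * s ^ 2) := by positivity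
    linarith
  have h2 := (h1.comp_add_left m).comp_mul_left' hs.ne'
  refine h2.congr (Filter.Eventually.of_forall fun t => ?_)
  simp only []
  congr 4
  field_simp
  ring

lemma lim_int (f : ℝ → ℝ) (m v : ℝ) (hv : 0 < v) :
    (∫ t, f (m + Real.sqrt v * t) * Real.exp (-(1 / 2) * t ^ 2)) / (∫ t : ℝ, Real.exp (-(1 / 2) * t ^ 2)) =
      (Real.sqrt (2 * Real.pi * v))⁻¹ * ∫ t : ℝ, f t * Real.exp (-(t - m) ^ 2 / (2 * v)) := by
  have hs := Real.sqrt_pos.2 hv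
  have hs2 := Real.sq_sqrt hv.le
  have h1 : ∀ t : ℝ, f (m + Real.sqrt v * t) * Real.exp (-(1 / 2) * t ^ 2) =
      (fun u => f (m + u) * Real.exp (-((m + u) - m) ^ 2 / (2 * v))) (Real.sqrt v * t) := by
    intro t
    simp only []
    congr 2
    rw [add_sub_cancel_left, mul_pow, hs2]
    field_simp
  simp_rw [h1]
  rw [Measure.integral_comp_mul_left
      (fun u => f (m + u) * Real.exp (-((m + u) - m) ^ 2 / (2 * v))),
    integral_add_left_eq_self (fun u => f u * Real.exp (-(u - m) ^ 2 / (2 * v))) m,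
    integral_gaussian, abs_of_pos (inv_pos.2 hs), smul_eq_mul]
  rw [show Real.pi / (1 / 2) = 2 * Real.pi by ring, Real.sqrt_mul (by positivity) v, mul_inv]
  ring

theorem stmt18 (ρ m : ℝ) (hρ : 0 < ρ)
    (hm : m ∈ Set.Ioo (-Real.sqrt ρ) (Real.sqrt ρ))
    -- the fixed coordinate `x` (realized in the lattice `Fin (N+1)` as soon as `x < N+1`)
    (x : ℕ)
    -- a choice of rotation matrix for every system size
    (U : (N : ℕ) → Matrix (Fin N) (Fin N) ℝ)
    (hU : ∀ N : ℕ, GoodRotation (Nat.succ_pos N) (U (N + 1)))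
    (f : ℝ → ℝ) (hf : Measurable f)
    -- `f` is integrable with respect to every Gaussian measure
    (hfint : ∀ a : ℝ, 0 < a →
      MeasureTheory.Integrable (fun t : ℝ => |f t| * Real.exp (-a * t ^ 2))) :
    -- the single-coordinate expectations converge to the Gaussian expectation
    Filter.Tendsto
      (fun N : ℕ => ∫ φ, f (φ ⟨x % (N + 1), Nat.mod_lt x (Nat.succ_pos N)⟩)
        ∂(mcSpherical (Nat.succ_pos N) (U (N + 1)) m ρ))
      Filter.atTop
      (nhds ((Real.sqrt (2 * Real.pi * (ρ - m ^ 2)))⁻¹ *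
        ∫ t : ℝ, f t * Real.exp (-(t - m) ^ 2 / (2 * (ρ - m ^ 2))))) ∧
    -- in particular, the sequence of expectations is bounded uniformly in `N`
    ∃ C : ℝ, ∀ N : ℕ,
      |∫ φ, f (φ ⟨x % (N + 1), Nat.mod_lt x (Nat.succ_pos N)⟩)
        ∂(mcSpherical (Nat.succ_pos N) (U (N + 1)) m ρ)| ≤ C := by
  have hv : 0 < ρ - m ^ 2 := by
    have := Real.sq_lt.2 ⟨hm.1, hm.2⟩
    linarith
  have hs := Real.sqrt_pos.2 hv
  have hlim : Filter.Tendsto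
      (fun N : ℕ => ∫ φ, f (φ ⟨x % (N + 1), Nat.mod_lt x (Nat.succ_pos N)⟩)
        ∂(mcSpherical (Nat.succ_pos N) (U (N + 1)) m ρ))
      Filter.atTop
      (nhds ((Real.sqrt (2 * Real.pi * (ρ - m ^ 2)))⁻¹ *
        ∫ t : ℝ, f t * Real.exp (-(t - m) ^ 2 / (2 * (ρ - m ^ 2))))) := by
    rw [← lim_int f m _ hv, ← Filter.tendsto_add_atTop_iff_nat 1]
    have hnum := dct (fun t => f (m + Real.sqrt (ρ - m ^ 2) * t)) (by fun_prop)
      (int_shift f hf m _ hs hfint)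
    have hden := dct (fun _ => 1) measurable_const (by
      simpa using integrable_exp_neg_mul_sq (b := 1 / 8) (by norm_num))
    simp only [one_mul] at hden
    have hne : (∫ t : ℝ, Real.exp (-(1 / 2) * t ^ 2)) ≠ 0 := by
      rw [integral_gaussian]
      exact (Real.sqrt_pos.2 (by positivity)).ne'
    refine (hnum.div hden hne).congr' ?_
    filter_upwards [Filter.eventually_gt_atTop 0] with k hk
    obtain ⟨c, hc1, hc2⟩ := law2 ρ m hv k hk (Nat.succ_pos (k + 1)) (U (k + 2)) (hU (k + 1))
      ⟨x % (k + 1 + 1), Nat.mod_lt x (Nat.succ_pos (k + 1))⟩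
    refine Eq.trans ?_ (hc1 f hf).symm
    have hK : (∫ t, kap k t) ≠ 0 := right_ne_zero_of_mul (hc2 ▸ one_ne_zero)
    rw [Pi.div_apply, div_eq_iff hK, mul_right_comm, hc2, one_mul]
  refine ⟨hlim, ?_⟩
  obtain ⟨C, hC⟩ := hlim.abs.bddAbove_range
  exact ⟨C, fun N => hC ⟨N, rfl⟩⟩
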